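/- Let H_n be the physicists' Hermite polynomials, let D = {d_1 < … < d_M} be a finite set of positive integers, and let N ∈ ℕ with N ∉ D. Set Ξ_D = W[H_{d_1},…,H_{d_M}], P_{D,n} = W[H_{d_1},…,H_{d_M},H_n] for n ∉ D, and Ñ = (∑_{j=1}^{M} d_j) − M(M+1)/2 + N. Assume P_{D,N} has degree Ñ and let η : Fin Ñ → ℂ be injective with P_{D,N}(η_l) = 0 and Ξ_D(η_l) ≠ 0 for every l (so η_1,…,η_Ñ are all the zeros of P_{D,N}, necessarily simple, and none is a zero of Ξ_D). Then for all n ≠ m with n, m ∈ {0,…,N−1} \ D: ∑_{l=1}^{Ñ} P_{D,n}(η_l) · P_{D,m}(η_l) / ((P_{D,N})′(η_l))² = 0, where ′ denotes the polynomial derivative and evaluation at η_l ∈ ℂ is via the canonical map ℝ[X] → ℂ[X]. -/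

import Mathlib

/-!
Every `P = P_{D,n}` solves, with `Ξ = Ξ_D`, the same second order equation
`Ξ P″ - 2 (Ξ′ + x Ξ) P′ + (Ξ″ + 2x Ξ′) P = 2 (M - n) Ξ P`.
Hence, for `f = P_{D,n}`, `g = P_{D,m}` and `p = P_{D,N}`, the Wronskian `w = f g′ - f′ g` satisfies
`Ξ w′ - 2 (Ξ′ + x Ξ) w = 2 (n - m) Ξ f g`, whereas `Ξ p″ = 2 (Ξ′ + x Ξ) p′` at the zeros of `p`.
So the residue `w′ / p′² - w p″ / p′³` of `w / p²` at a zero of `p` is `2 (n - m) f g / p′²`. Since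
`deg f, deg g < deg p`, the fraction `w / p²` has no residue at infinity, and the residues at the
zeros of `p` sum to zero.

The differential equation comes from determinants, without dividing by any Wronskian. Raising the
order of one row of a Wronskian matrix by two, in all possible ways, gives a total `δ W`. It is a
difference `a - b` of two generalized Wronskians whose sum `a + b` is `W″`, and for eigenfunctions
of `∂² - y ∂`, with `y′` constant, it equals `y W′` plus a constant multiple of `W`. A three-term
Plücker relation connects `a` for `Ξ_D` with `b` for `P_{D,n}`.
-/

open Polynomial

/-- The physicists' Hermite polynomials: `H_0 = 1`, `H_{n+1} = 2·X·H_n − H_n′`. -/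
noncomputable def hermiteP : ℕ → Polynomial ℝ
  | 0 => 1
  | n + 1 => 2 * Polynomial.X * hermiteP n - Polynomial.derivative (hermiteP n)

/-- The Wronskian `W[f_1,…,f_m]`: determinant of the matrix whose `(i,j)` entry is the
`i`-th derivative of `f j` (indices starting from `0`). -/
noncomputable def wronskian {m : ℕ} (f : Fin m → Polynomial ℝ) : Polynomial ℝ :=
  (Matrix.of fun i j : Fin m => Polynomial.derivative^[(i : ℕ)] (f j)).det

/-- The Krein–Adler polynomial `P_{D,n} = W[H_{d_1},…,H_{d_M},H_n]` based on the
physicists' Hermite polynomials. -/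
noncomputable def KAHermite {M : ℕ} (d : Fin M → ℕ) (n : ℕ) : Polynomial ℝ :=
  wronskian (Fin.snoc (fun j => hermiteP (d j)) (hermiteP n))

/-- The denominator polynomial `Ξ_D = W[H_{d_1},…,H_{d_M}]`. -/
noncomputable def XiHermite {M : ℕ} (d : Fin M → ℕ) : Polynomial ℝ :=
  wronskian (fun j => hermiteP (d j))

section Determinants

variable {n A : Type*} [Fintype n] [DecidableEq n] [CommRing A]

theorem det_updateRow_eq_sum_mul_adjugate (M : Matrix n n A) (i : n) (b : n → A) :
    (M.updateRow i b).det = ∑ j, b j * M.adjugate j i := by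
  rw [← Matrix.cramer_transpose_apply, Matrix.cramer_eq_adjugate_mulVec,
    ← Matrix.adjugate_transpose]
  exact dotProduct_comm _ _

theorem sum_det_updateRow_mul (M C : Matrix n n A) :
    ∑ i, (M.updateRow i ((M * C) i)).det = M.det * C.trace := by
  calc ∑ i, (M.updateRow i ((M * C) i)).det
      = (M * C * M.adjugate).trace := by
        simp only [det_updateRow_eq_sum_mul_adjugate]
        rfl
    _ = (M.adjugate * M * C).trace := by rw [Matrix.trace_mul_comm, Matrix.mul_assoc]
    _ = M.det * C.trace := by simp [Matrix.adjugate_mul]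

/-- Expands the determinant with columns `M *ᵥ v` and those of `M`, which are dependent. -/
theorem sum_neg_one_pow_mul_mulVec_mul_det_submatrix_succAbove {k : ℕ}
    (M : Matrix (Fin (k + 1)) (Fin k) A) (v : Fin k → A) :
    ∑ i : Fin (k + 1), (-1) ^ (i : ℕ) * (M.mulVec v) i * (M.submatrix i.succAbove id).det = 0 := by
  set Q : Matrix (Fin (k + 1)) (Fin (k + 1)) A := Matrix.of fun i => Fin.cons (M.mulVec v i) (M i)
    with hQ
  have hker : Q.mulVec (Fin.cons (-1) v) = 0 := by
    ext i
    simp [hQ, Matrix.mulVec, dotProduct, Fin.sum_univ_succ]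
  have hdet : Q.det = 0 := by
    have h := congrArg (fun w => Q.adjugate.mulVec w 0) hker
    simpa [Matrix.mulVec_mulVec, Matrix.adjugate_mul, Matrix.smul_mulVec] using h
  rw [← hdet, Matrix.det_succ_column_zero]
  rfl

end Determinants

section Derivation

variable {R A : Type*} [CommSemiring R] [CommRing A] [Algebra R A] (D : Derivation R A A)

theorem derivation_prod {ι : Type*} [DecidableEq ι] (s : Finset ι) (f : ι → A) :
    D (∏ i ∈ s, f i) = ∑ i ∈ s, ∏ j ∈ s, Function.update f i (D (f i)) j := by
  induction s using Finset.induction_on with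
  | empty => simp
  | insert i s hi ih =>
    have hne : ∀ j ∈ s, j ≠ i := fun j hj h => hi (h ▸ hj)
    rw [Finset.prod_insert hi, D.leibniz, ih, Finset.sum_insert hi, Finset.prod_insert hi,
      smul_eq_mul, smul_eq_mul, Finset.mul_sum, add_comm]
    congr 1
    · rw [Function.update_self, mul_comm]
      congr 1
      exact Finset.prod_congr rfl fun j hj => (Function.update_of_ne (hne j hj) _ _).symm
    · refine Finset.sum_congr rfl fun j hj => ?_
      rw [Finset.prod_insert hi, Function.update_of_ne (hne j hj).symm]

theorem derivation_det {n : Type*} [Fintype n] [DecidableEq n] (M : Matrix n n A) :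
    D M.det = ∑ i, (M.updateRow i (fun j => D (M i j))).det := by
  simp_rw [← Matrix.det_transpose M, ← Matrix.det_transpose (Matrix.updateRow _ _ _),
    Matrix.det_apply, map_sum]
  rw [Finset.sum_comm]
  refine Finset.sum_congr rfl fun σ _ => ?_
  rw [← Finset.smul_sum, Units.smul_def, Units.smul_def, map_zsmul, derivation_prod]
  refine congrArg _ (Finset.sum_congr rfl fun i _ => Finset.prod_congr rfl fun j _ => ?_)
  rcases eq_or_ne j i with rfl | h
  · simp
  · simp [h]

end Derivation

section GenWronskian

variable {R A : Type*} [CommSemiring R] [CommRing A] [Algebra R A] (D : Derivation R A A)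

/-- The generalized Wronskian of the family `f` with respect to the derivation `D`: row `i` of the
determinant consists of the derivatives of order `r i`. The Wronskian itself is the case
`r = Fin.val`. -/
def genWronskian {ι : Type*} [Fintype ι] [DecidableEq ι] (f : ι → A) (r : ι → ℕ) : A :=
  (Matrix.of fun i j => D^[r i] (f j)).det

section Orders

variable {ι : Type*} [Fintype ι] [DecidableEq ι] (f : ι → A) (r : ι → ℕ)

theorem genWronskian_update (i : ι) (k : ℕ) :
    genWronskian D f (Function.update r i k) =
      ((Matrix.of fun i j => D^[r i] (f j)).updateRow i fun j => D^[k] (f j)).det := by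
  rw [genWronskian]
  congr 1
  ext a b
  rcases eq_or_ne a i with rfl | h <;> simp [*]

theorem genWronskian_eq_zero_of_eq {i j : ι} (hij : i ≠ j) (h : r i = r j) :
    genWronskian D f r = 0 :=
  Matrix.det_zero_of_row_eq hij (funext fun k => by simp [h])

theorem genWronskian_comp_swap {i j : ι} (hij : i ≠ j) :
    genWronskian D f (r ∘ Equiv.swap i j) = -genWronskian D f r := by
  calc genWronskian D f (r ∘ Equiv.swap i j)
      = Equiv.Perm.sign (Equiv.swap i j) * genWronskian D f r :=
        Matrix.det_permute (Equiv.swap i j) (Matrix.of fun i j => D^[r i] (f j))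
    _ = -genWronskian D f r := by simp [Equiv.Perm.sign_swap hij]

theorem derivation_genWronskian :
    D (genWronskian D f r) = ∑ i, genWronskian D f (Function.update r i (r i + 1)) := by
  simp only [genWronskian_update, Function.iterate_succ_apply']
  exact derivation_det D _

end Orders

section Fin

variable {k : ℕ}

theorem derivation_genWronskian_val (f : Fin (k + 1) → A) :
    D (genWronskian D f Fin.val) =
      genWronskian D f (Function.update Fin.val (Fin.last k) (k + 1)) := by
  rw [derivation_genWronskian, Fin.sum_univ_castSucc, Finset.sum_eq_zero, zero_add, Fin.val_last]
  intro i _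
  refine genWronskian_eq_zero_of_eq D f _ (Fin.castSucc_lt_succ (i := i)).ne ?_
  rw [Function.update_self, Function.update_of_ne Fin.castSucc_lt_succ.ne', Fin.val_succ,
    Fin.val_castSucc]

theorem derivation_derivation_genWronskian_val (f : Fin (k + 1) → A) :
    D (D (genWronskian D f Fin.val)) =
      genWronskian D f (Function.update Fin.val (Fin.last k) (k + 2)) +
        ∑ i : Fin k, genWronskian D f (Function.update
          (Function.update Fin.val (Fin.last k) (k + 1)) i.castSucc (i + 1)) := by
  rw [derivation_genWronskian_val, derivation_genWronskian, Fin.sum_univ_castSucc, add_comm]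
  simp

/-- Both sides vanish unless `i + 1 = k`, when the two sequences of orders end in `k + 1, k` and
`k, k + 1`. -/
theorem genWronskian_update_castSucc_add_two (f : Fin (k + 1) → A) (i : Fin k) :
    genWronskian D f (Function.update Fin.val i.castSucc (i + 2)) =
      -genWronskian D f (Function.update
        (Function.update Fin.val (Fin.last k) (k + 1)) i.castSucc (i + 1)) := by
  have hi : i.castSucc ≠ Fin.last k := (Fin.castSucc_lt_last i).ne
  rcases eq_or_ne ((i : ℕ) + 1) k with h | h
  · rw [← genWronskian_comp_swap D f _ hi]
    congr 1
    ext a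
    rcases eq_or_ne a i.castSucc with rfl | ha
    · simp [hi.symm, h]
    rcases eq_or_ne a (Fin.last k) with rfl | hb
    · simp [ha, h]
    · simp [Equiv.swap_apply_of_ne_of_ne ha hb, ha, hb]
  · have hik : (i : ℕ) + 2 < k + 1 := by omega
    rw [genWronskian_eq_zero_of_eq D f _ (i := i.castSucc) (j := ⟨i + 2, hik⟩),
      genWronskian_eq_zero_of_eq D f _ (i := i.castSucc) (j := ⟨i + 1, by omega⟩), neg_zero]
    all_goals simp [Fin.ext_iff, h]

theorem sum_genWronskian_update_add_two (f : Fin (k + 1) → A) :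
    ∑ i, genWronskian D f (Function.update Fin.val i (i + 2)) =
      genWronskian D f (Function.update Fin.val (Fin.last k) (k + 2)) -
        ∑ i : Fin k, genWronskian D f (Function.update
          (Function.update Fin.val (Fin.last k) (k + 1)) i.castSucc (i + 1)) := by
  simp only [Fin.sum_univ_castSucc, Fin.val_castSucc, Fin.val_last,
    genWronskian_update_castSucc_add_two, Finset.sum_neg_distrib]
  ring

theorem sum_genWronskian_update_update_add_one (f : Fin (k + 2) → A) :
    ∑ i : Fin (k + 1), genWronskian D f (Function.update
        (Function.update Fin.val (Fin.last (k + 1)) (k + 2)) i.castSucc (i + 1)) =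
      genWronskian D f fun j => (Fin.last k).castSucc.castSucc.succAbove j := by
  rw [Fin.sum_univ_castSucc, Finset.sum_eq_zero, zero_add]
  · congr 1
    ext j
    simp only [Function.update_apply, Fin.succAbove, Fin.ext_iff, Fin.lt_def]
    grind
  · intro i _
    refine genWronskian_eq_zero_of_eq D f _ (Fin.castSucc_lt_succ (i := i.castSucc)).ne ?_
    simp only [Function.update_apply, Fin.ext_iff, Fin.val_castSucc, Fin.val_succ, Fin.val_last]
    grind

theorem genWronskian_castSucc_last_succAbove (f : Fin (k + 1) → A) :
    genWronskian D f (fun j => (Fin.last k).castSucc.succAbove j) =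
      D (genWronskian D f Fin.val) := by
  rw [derivation_genWronskian_val]
  congr 1
  ext j
  simp only [Function.update_apply, Fin.succAbove, Fin.ext_iff, Fin.lt_def]
  grind

theorem exists_mulVec_eq_genWronskian_update_init (F : Fin (k + 2) → A) (n : ℕ) :
    ∃ v : Fin (k + 2) → A, ∀ i : Fin n,
      (Matrix.of fun (i : Fin n) j => D^[i] (F j)).mulVec v i =
        genWronskian D (Fin.init F) (Function.update Fin.val (Fin.last k) i) := by
  set M : Matrix (Fin (k + 1)) (Fin (k + 1)) A :=
    Matrix.of fun i j => D^[(i : ℕ)] (Fin.init F j) with hM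
  refine ⟨Fin.snoc (fun j => M.adjugate j (Fin.last k)) 0, fun i => ?_⟩
  rw [genWronskian_update, ← hM, det_updateRow_eq_sum_mul_adjugate]
  simp [Matrix.mulVec, dotProduct, Fin.sum_univ_castSucc, Fin.init]

/-- Only the orders `k`, `k + 1`, `k + 2` contribute to the expansion; the lower ones repeat a row
of the Wronskian of `Fin.init F`. -/
theorem genWronskian_plucker (F : Fin (k + 2) → A) :
    genWronskian D (Fin.init F) Fin.val *
        genWronskian D F (fun j => (Fin.last k).castSucc.castSucc.succAbove j) -
      D (genWronskian D (Fin.init F) Fin.val) * D (genWronskian D F Fin.val) +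
      genWronskian D (Fin.init F) (Function.update Fin.val (Fin.last k) (k + 2)) *
        genWronskian D F Fin.val = 0 := by
  obtain ⟨v, hv⟩ := exists_mulVec_eq_genWronskian_update_init D F (k + 3)
  have hsub (i : Fin (k + 3)) :
      ((Matrix.of fun (i : Fin (k + 3)) j => D^[i] (F j)).submatrix i.succAbove id).det =
        genWronskian D F (fun j => i.succAbove j) := rfl
  have hzero (i : Fin k) :
      genWronskian D (Fin.init F) (Function.update Fin.val (Fin.last k) i) = 0 := by
    refine genWronskian_eq_zero_of_eq D _ _ (Fin.castSucc_lt_last i).ne ?_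
    simp [(Fin.castSucc_lt_last i).ne]
  have hself : Function.update Fin.val (Fin.last k) k = Fin.val :=
    Function.update_eq_self (Fin.last k) Fin.val
  have h := sum_neg_one_pow_mul_mulVec_mul_det_submatrix_succAbove
    (Matrix.of fun (i : Fin (k + 3)) j => D^[i] (F j)) v
  simp only [hv, hsub, Fin.sum_univ_castSucc, Fin.val_castSucc, hzero, mul_zero, zero_mul,
    Finset.sum_const_zero, zero_add, Fin.val_last, hself, ← derivation_genWronskian_val,
    genWronskian_castSucc_last_succAbove, Fin.succAbove_last] at h
  rw [← neg_one_pow_mul_eq_zero_iff (n := k)]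
  linear_combination h

/-- The second derivatives are sums, and the totals over `i` differences, of the same two
generalized Wronskians; what remains is twice the relation `genWronskian_plucker`. -/
theorem genWronskian_bilinear {m : ℕ} (F : Fin (m + 1) → A) :
    genWronskian D (Fin.init F) Fin.val * D (D (genWronskian D F Fin.val)) -
        2 * D (genWronskian D (Fin.init F) Fin.val) * D (genWronskian D F Fin.val) +
        D (D (genWronskian D (Fin.init F) Fin.val)) * genWronskian D F Fin.val =
      genWronskian D (Fin.init F) Fin.val *
          (∑ i, genWronskian D F (Function.update Fin.val i (i + 2))) -
        (∑ i, genWronskian D (Fin.init F) (Function.update Fin.val i (i + 2))) *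
          genWronskian D F Fin.val := by
  rw [derivation_derivation_genWronskian_val, sum_genWronskian_update_add_two]
  cases m with
  | zero => simp [genWronskian]
  | succ k =>
    rw [derivation_derivation_genWronskian_val, sum_genWronskian_update_add_two,
      sum_genWronskian_update_update_add_one]
    linear_combination 2 * genWronskian_plucker D F

end Fin

section Eigenfunctions

variable {D} {a y : A}

theorem iterate_add_two_of_eigenfunction (ha : D a = 0) (hy : D y = a) {c f : A}
    (hc : D c = 0) (hf : D (D f) = y * D f + c * f) (i : ℕ) :
    D^[i + 2] f = y * D^[i + 1] f + (i * a + c) * D^[i] f := by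
  induction i with
  | zero => simpa using hf
  | succ i ih =>
    have h := congrArg D ih
    simp only [map_add, D.leibniz, smul_eq_mul, ha, hy, hc, D.map_natCast,
      ← Function.iterate_succ_apply'] at h
    push_cast
    linear_combination h

theorem sum_genWronskian_update_add_two_of_eigenfunction (ha : D a = 0) (hy : D y = a)
    {ι : Type*} [Fintype ι] [DecidableEq ι] {f c : ι → A} (hc : ∀ j, D (c j) = 0)
    (hf : ∀ j, D (D (f j)) = y * D (f j) + c j * f j) (r : ι → ℕ) :
    ∑ i, genWronskian D f (Function.update r i (r i + 2)) =
      y * D (genWronskian D f r) + ((∑ i, r i : ℕ) * a + ∑ j, c j) * genWronskian D f r := by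
  set M : Matrix ι ι A := Matrix.of fun i j => D^[r i] (f j) with hM
  have hrow (i : ι) : (fun j => D^[r i + 2] (f j)) =
      y • (fun j => D^[r i + 1] (f j)) + ((r i * a) • M i + (M * Matrix.diagonal c) i) := by
    ext j
    simp only [iterate_add_two_of_eigenfunction ha hy (hc j) (hf j), Pi.add_apply, Pi.smul_apply,
      smul_eq_mul, Matrix.mul_diagonal, hM, Matrix.of_apply]
    ring
  have hterm (i : ι) : genWronskian D f (Function.update r i (r i + 2)) =
      y * genWronskian D f (Function.update r i (r i + 1)) +
        (r i * a * genWronskian D f r + (M.updateRow i ((M * Matrix.diagonal c) i)).det) := by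
    rw [genWronskian_update, hrow, Matrix.det_updateRow_add, Matrix.det_updateRow_smul,
      Matrix.det_updateRow_add, Matrix.det_updateRow_smul, Matrix.updateRow_eq_self,
      ← genWronskian_update]
    rfl
  have htrace : ∑ i, (M.updateRow i ((M * Matrix.diagonal c) i)).det =
      genWronskian D f r * ∑ j, c j := by
    rw [sum_det_updateRow_mul, Matrix.trace_diagonal]
    rfl
  simp only [hterm, Finset.sum_add_distrib, ← Finset.mul_sum, ← Finset.sum_mul, htrace,
    ← derivation_genWronskian]
  push_cast
  ring

theorem genWronskian_ode_of_eigenfunction (ha : D a = 0) (hy : D y = a)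
    {m : ℕ} {F c : Fin (m + 1) → A}
    (hc : ∀ j, D (c j) = 0) (hF : ∀ j, D (D (F j)) = y * D (F j) + c j * F j) :
    genWronskian D (Fin.init F) Fin.val * D (D (genWronskian D F Fin.val)) -
        (2 * D (genWronskian D (Fin.init F) Fin.val) + y * genWronskian D (Fin.init F) Fin.val) *
          D (genWronskian D F Fin.val) +
        (D (D (genWronskian D (Fin.init F) Fin.val)) +
          y * D (genWronskian D (Fin.init F) Fin.val)) * genWronskian D F Fin.val =
      (m * a + c (Fin.last m)) *
        (genWronskian D (Fin.init F) Fin.val * genWronskian D F Fin.val) := by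
  have hP := sum_genWronskian_update_add_two_of_eigenfunction ha hy hc hF Fin.val
  have hΞ := sum_genWronskian_update_add_two_of_eigenfunction ha hy (f := Fin.init F)
    (c := Fin.init c) (fun j => hc j.castSucc) (fun j => hF j.castSucc) Fin.val
  have h := genWronskian_bilinear D F
  rw [hP, hΞ, Fin.sum_univ_castSucc, Fin.sum_univ_castSucc] at h
  simp only [Fin.val_castSucc, Fin.val_last, Fin.init] at h ⊢
  push_cast at h
  linear_combination h

end Eigenfunctions

end GenWronskian

section Degrees

variable {R : Type*}

theorem degree_derivative_add_one_le [Semiring R] (p : R[X]) :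
    (derivative p).degree + 1 ≤ p.degree := by
  rcases eq_or_ne p 0 with rfl | hp
  · simp
  · exact Nat.WithBot.add_one_le_of_lt (degree_derivative_lt hp)

theorem degree_iterate_derivative_add_le [Semiring R] (p : R[X]) (i : ℕ) :
    (derivative^[i] p).degree + i ≤ p.degree := by
  induction i with
  | zero => simp
  | succ i ih =>
    refine le_trans ?_ ih
    rw [Function.iterate_succ_apply', Nat.cast_succ, add_comm (i : WithBot ℕ), ← add_assoc]
    gcongr
    exact degree_derivative_add_one_le _

theorem degree_genWronskian_add_le [CommRing R] {ι : Type*} [Fintype ι] [DecidableEq ι]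
    (f : ι → R[X]) (r : ι → ℕ) :
    (genWronskian (derivative' : Derivation R R[X] R[X]) f r).degree + (∑ i, r i : ℕ) ≤
      ∑ j, (f j).degree := by
  have hterm (σ : Equiv.Perm ι) :
      (Equiv.Perm.sign σ • ∏ j, derivative^[r (σ j)] (f j)).degree + (∑ i, r i : ℕ) ≤
        ∑ j, (f j).degree :=
    calc _ ≤ ∑ j, (derivative^[r (σ j)] (f j)).degree + (∑ j, r (σ j) : ℕ) := by
          rw [Equiv.sum_comp σ r]
          gcongr
          exact (degree_smul_le _ _).trans (degree_prod_le _ _)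
      _ ≤ ∑ j, (f j).degree := by
          rw [Nat.cast_sum, ← Finset.sum_add_distrib]
          exact Finset.sum_le_sum fun j _ => degree_iterate_derivative_add_le _ _
  obtain ⟨σ, -, hσ⟩ := Finset.exists_mem_eq_sup Finset.univ Finset.univ_nonempty
    fun σ : Equiv.Perm ι => (Equiv.Perm.sign σ • ∏ j, derivative^[r (σ j)] (f j)).degree
  refine le_trans ?_ (hterm σ)
  gcongr
  rw [genWronskian, Matrix.det_apply, ← hσ]
  exact degree_sum_le _ _

end Degrees

section Residues

open Lagrange

variable {ι K : Type*} [Field K] {s : Finset ι} {v : ι → K}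

theorem nodal_dvd_of_eval_eq_zero (hv : Set.InjOn v s) {p : K[X]}
    (hp : ∀ i ∈ s, p.eval (v i) = 0) : nodal s v ∣ p :=
  Finset.prod_dvd_of_coprime
    (fun _ hi _ hj hij => isCoprime_X_sub_C_of_isUnit_sub (sub_ne_zero.2 (hv.ne hi hj hij)).isUnit)
    fun i hi => dvd_iff_isRoot.2 (hp i hi)

theorem exists_eq_C_mul_nodal (hv : Set.InjOn v s) {p : K[X]} (hp0 : p ≠ 0)
    (hdeg : p.natDegree = s.card) (hp : ∀ i ∈ s, p.eval (v i) = 0) :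
    ∃ c ≠ 0, p = C c * nodal s v :=
  ⟨p.leadingCoeff, leadingCoeff_ne_zero.2 hp0,
    eq_leadingCoeff_mul_of_monic_of_dvd_of_natDegree_le nodal_monic
      (nodal_dvd_of_eval_eq_zero hv hp) (by rw [natDegree_nodal, hdeg])⟩

theorem eval_derivative_nodal_ne_zero (hv : Set.InjOn v s) {i : ι} (hi : i ∈ s) :
    (derivative (nodal s v)).eval (v i) ≠ 0 := by
  classical
  rw [eval_nodal_derivative_eval_node_eq hi, eval_nodal, Finset.prod_ne_zero_iff]
  intro j hj
  obtain ⟨hji, hjs⟩ := Finset.mem_erase.1 hj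
  exact sub_ne_zero.2 (hv.ne hi hjs hji.symm)

theorem eval_derivative_derivative_nodal [DecidableEq ι] {i : ι} (hi : i ∈ s) :
    (derivative (derivative (nodal s v))).eval (v i) =
      2 * (derivative (nodal (s.erase i) v)).eval (v i) := by
  rw [nodal_eq_mul_nodal_erase hi]
  simp only [derivative_mul, derivative_add, derivative_sub, derivative_X, derivative_C, sub_zero,
    one_mul, eval_add, eval_mul, eval_sub, eval_X, eval_C, sub_self, zero_mul, add_zero]
  ring

theorem sum_eval_div_eval_derivative_nodal (hv : Set.InjOn v s) {q : K[X]}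
    (hq : q.degree < (s.card - 1 : ℕ)) :
    ∑ i ∈ s, q.eval (v i) / (derivative (nodal s v)).eval (v i) = 0 := by
  classical
  rw [← coeff_eq_zero_of_degree_lt hq,
    coeff_eq_sum hv (hq.trans_le (by exact_mod_cast Nat.sub_le _ _))]
  refine Finset.sum_congr rfl fun i hi => ?_
  rw [eval_nodal_derivative_eval_node_eq hi, eval_nodal]

theorem eval_sum_C_mul_nodal_erase_sq [DecidableEq ι] (a : ι → K) {i : ι} (hi : i ∈ s) :
    (∑ j ∈ s, C (a j) * nodal (s.erase j) v ^ 2).eval (v i) =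
      a i * (derivative (nodal s v)).eval (v i) ^ 2 := by
  rw [eval_finsetSum, Finset.sum_eq_single_of_mem i hi]
  · simp [eval_nodal_derivative_eval_node_eq hi]
  · intro j _ hji
    simp [eval_nodal_at_node (Finset.mem_erase.2 ⟨hji.symm, hi⟩)]

theorem eval_derivative_sum_C_mul_nodal_erase_sq [DecidableEq ι] (a : ι → K) {i : ι} (hi : i ∈ s) :
    (derivative (∑ j ∈ s, C (a j) * nodal (s.erase j) v ^ 2)).eval (v i) =
      a i * (derivative (nodal s v)).eval (v i) *
        (derivative (derivative (nodal s v))).eval (v i) := by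
  rw [derivative_sum, eval_finsetSum, Finset.sum_eq_single_of_mem i hi,
    eval_derivative_derivative_nodal hi]
  · simp only [derivative_C_mul, derivative_pow, eval_mul, eval_pow, eval_C,
      ← eval_nodal_derivative_eval_node_eq hi]
    push_cast
    ring
  · intro j _ hji
    simp [derivative_pow, eval_nodal_at_node (Finset.mem_erase.2 ⟨hji.symm, hi⟩)]

/-- With `Q = nodal s v`, the right-hand side is `Q′` times the residue of `h / Q ^ 2` at `v i`.
Subtracting the double poles `a i / (X - v i) ^ 2` from `h / Q ^ 2` leaves `q / Q`. -/
theorem exists_degree_lt_eval_eq_residue_mul (hv : Set.InjOn v s) {h : K[X]}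
    (hh : h.natDegree + 1 < 2 * s.card) :
    ∃ q : K[X], q.degree < (s.card - 1 : ℕ) ∧ ∀ i ∈ s, q.eval (v i) =
      (derivative h).eval (v i) / (derivative (nodal s v)).eval (v i) -
        h.eval (v i) * (derivative (derivative (nodal s v))).eval (v i) /
          (derivative (nodal s v)).eval (v i) ^ 2 := by
  classical
  have hQ' {i} (hi : i ∈ s) : (derivative (nodal s v)).eval (v i) ≠ 0 :=
    eval_derivative_nodal_ne_zero hv hi
  set a : ι → K := fun i => h.eval (v i) / (derivative (nodal s v)).eval (v i) ^ 2
  have ha {i} (hi : i ∈ s) : a i * (derivative (nodal s v)).eval (v i) ^ 2 = h.eval (v i) :=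
    div_mul_cancel₀ _ (pow_ne_zero 2 (hQ' hi))
  set S : K[X] := ∑ i ∈ s, C (a i) * nodal (s.erase i) v ^ 2 with hS
  have hSdeg : S.natDegree ≤ 2 * (s.card - 1) := by
    refine natDegree_sum_le_of_forall_le _ _ fun i hi => (natDegree_C_mul_le _ _).trans ?_
    exact natDegree_pow_le_of_le 2 (by rw [natDegree_nodal, Finset.card_erase_of_mem hi])
  obtain ⟨q, hq⟩ : nodal s v ∣ h - S := nodal_dvd_of_eval_eq_zero hv fun i hi => by
    rw [eval_sub, hS, eval_sum_C_mul_nodal_erase_sq a hi, ha hi, sub_self]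
  refine ⟨q, ?_, fun i hi => ?_⟩
  · rcases eq_or_ne q 0 with rfl | hq0
    · simp
    · have hhdeg : h.natDegree ≤ 2 * (s.card - 1) := by omega
      have hdeg := (natDegree_sub_le_of_le hhdeg hSdeg).trans (max_self _).le
      rw [hq, nodal_monic.natDegree_mul' hq0, natDegree_nodal] at hdeg
      rw [← natDegree_lt_iff_degree_lt hq0]
      omega
  · have hqi := congrArg (fun p => (derivative p).eval (v i)) hq
    simp only [derivative_sub, derivative_mul, eval_sub, eval_add, eval_mul, hS,
      eval_derivative_sum_C_mul_nodal_erase_sq a hi, eval_nodal_at_node hi] at hqi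
    have := hQ' hi
    rw [← ha hi]
    field_simp
    linear_combination -hqi

theorem eval_derivative_ne_zero_of_natDegree_eq_card (hv : Set.InjOn v s) {p : K[X]} (hp0 : p ≠ 0)
    (hdeg : p.natDegree = s.card) (hp : ∀ i ∈ s, p.eval (v i) = 0) {i : ι} (hi : i ∈ s) :
    (derivative p).eval (v i) ≠ 0 := by
  obtain ⟨c, hc, rfl⟩ := exists_eq_C_mul_nodal hv hp0 hdeg hp
  simpa [hc] using eval_derivative_nodal_ne_zero hv hi

theorem sum_residue_eq_zero (hv : Set.InjOn v s) {p h : K[X]} (hp : p.natDegree = s.card)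
    (hroot : ∀ i ∈ s, p.eval (v i) = 0) (hh : h.natDegree + 1 < 2 * s.card) :
    ∑ i ∈ s, ((derivative h).eval (v i) / (derivative p).eval (v i) ^ 2 -
      h.eval (v i) * (derivative (derivative p)).eval (v i) /
        (derivative p).eval (v i) ^ 3) = 0 := by
  obtain ⟨q, hqdeg, hq⟩ := exists_degree_lt_eval_eq_residue_mul hv hh
  obtain ⟨c, hc, rfl⟩ := exists_eq_C_mul_nodal hv
    (ne_zero_of_natDegree_gt (n := 0) (by omega)) hp hroot
  have hsum := congrArg ((c ^ 2)⁻¹ * ·) (sum_eval_div_eval_derivative_nodal hv hqdeg)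
  simp only [Finset.mul_sum, mul_zero] at hsum
  rw [← hsum]
  refine Finset.sum_congr rfl fun i hi => ?_
  have := eval_derivative_nodal_ne_zero hv hi
  rw [hq i hi]
  simp only [derivative_C_mul, eval_mul, eval_C]
  field_simp

theorem sum_eval_mul_eval_div_eval_derivative_sq (hv : Set.InjOn v s) {A B V p f g : K[X]}
    {a b c : K} (hab : a ≠ b) (hA : ∀ i ∈ s, A.eval (v i) ≠ 0)
    (hpdeg : p.natDegree = s.card) (hroot : ∀ i ∈ s, p.eval (v i) = 0)
    (hfdeg : f.degree < s.card) (hgdeg : g.degree < s.card)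
    (hp : A * derivative (derivative p) + B * derivative p + V * p = C c * (A * p))
    (hf : A * derivative (derivative f) + B * derivative f + V * f = C a * (A * f))
    (hg : A * derivative (derivative g) + B * derivative g + V * g = C b * (A * g)) :
    ∑ i ∈ s, f.eval (v i) * g.eval (v i) / (derivative p).eval (v i) ^ 2 = 0 := by
  rcases eq_or_ne f 0 with rfl | hf0
  · simp
  rcases eq_or_ne g 0 with rfl | hg0
  · simp
  have hW : A * derivative (f.wronskian g) + B * f.wronskian g = C (b - a) * (A * (f * g)) := by
    simp only [Polynomial.wronskian, derivative_sub, derivative_mul, C_sub]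
    linear_combination f * hg - g * hf
  rw [← natDegree_lt_iff_degree_lt hf0] at hfdeg
  rw [← natDegree_lt_iff_degree_lt hg0] at hgdeg
  have hWdeg : (f.wronskian g).natDegree + 1 < 2 * s.card := by
    rcases eq_or_ne (f.wronskian g) 0 with h0 | h0
    · rw [h0, natDegree_zero]
      omega
    · have := natDegree_wronskian_lt_add h0
      omega
  rw [← mul_right_inj' (sub_ne_zero.2 hab.symm), mul_zero, Finset.mul_sum,
    ← sum_residue_eq_zero hv hpdeg hroot hWdeg]
  refine Finset.sum_congr rfl fun i hi => ?_
  have hpi := congrArg (eval (v i)) hp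
  have hWi := congrArg (eval (v i)) hW
  simp only [eval_add, eval_mul, hroot i hi, mul_zero, add_zero, eval_C] at hpi hWi
  have hp0 : p ≠ 0 := ne_zero_of_natDegree_gt (n := 0) (by omega)
  have hp' := eval_derivative_ne_zero_of_natDegree_eq_card hv hp0 hpdeg hroot hi
  have hAi := hA i hi
  field_simp
  rw [← mul_right_inj' hAi]
  linear_combination (f.wronskian g).eval (v i) * hpi - (derivative p).eval (v i) * hWi

end Residues

section Hermite

theorem derivative_hermiteP_succ (n : ℕ) :
    derivative (hermiteP (n + 1)) = C (2 * (n + 1 : ℝ)) * hermiteP n := by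
  induction n with
  | zero => simp [hermiteP, C_ofNat]
  | succ n ih =>
    rw [hermiteP, derivative_sub, derivative_mul, ih, derivative_C_mul]
    simp only [hermiteP, derivative_mul, derivative_ofNat, derivative_X, C_mul, C_add, C_ofNat,
      C_eq_natCast, C_1, Nat.cast_succ]
    ring

theorem hermiteP_ode (n : ℕ) :
    derivative (derivative (hermiteP n)) =
      2 * X * derivative (hermiteP n) + C (-2 * n : ℝ) * hermiteP n := by
  cases n with
  | zero => simp [hermiteP]
  | succ n =>
    rw [derivative_hermiteP_succ, derivative_C_mul, hermiteP]
    simp only [C_mul, C_add, C_neg, C_ofNat, C_eq_natCast, C_1, Nat.cast_succ]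
    ring

theorem degree_hermiteP_le (n : ℕ) : (hermiteP n).degree ≤ n := by
  induction n with
  | zero => simp [hermiteP]
  | succ n ih =>
    refine (degree_sub_le _ _).trans (max_le ?_ ?_)
    · rw [mul_right_comm, ← C_ofNat, ← smul_eq_C_mul, Nat.cast_succ]
      exact (degree_mul_le _ _).trans (add_le_add ((degree_smul_le _ _).trans ih) degree_X_le)
    · exact degree_derivative_le.trans (ih.trans (by exact_mod_cast n.le_succ))

theorem XiHermite_eq_genWronskian {M : ℕ} (d : Fin M → ℕ) :
    XiHermite d = genWronskian (derivative' : Derivation ℝ ℝ[X] ℝ[X]) (hermiteP ∘ d) Fin.val :=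
  rfl

theorem KAHermite_eq_genWronskian {M : ℕ} (d : Fin M → ℕ) (n : ℕ) :
    KAHermite d n = genWronskian (derivative' : Derivation ℝ ℝ[X] ℝ[X])
      (hermiteP ∘ (Fin.snoc d n : Fin (M + 1) → ℕ)) Fin.val := by
  rw [Fin.comp_snoc]
  rfl

theorem KAHermite_ode {M : ℕ} (d : Fin M → ℕ) (n : ℕ) :
    XiHermite d * derivative (derivative (KAHermite d n)) +
        -(2 * derivative (XiHermite d) + 2 * X * XiHermite d) * derivative (KAHermite d n) +
        (derivative (derivative (XiHermite d)) + 2 * X * derivative (XiHermite d)) *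
          KAHermite d n =
      C (2 * (M - n) : ℝ) * (XiHermite d * KAHermite d n) := by
  have hinit : Fin.init (hermiteP ∘ (Fin.snoc d n : Fin (M + 1) → ℕ)) = hermiteP ∘ d := by
    rw [Fin.comp_snoc, Fin.init_snoc]
  have h := genWronskian_ode_of_eigenfunction (D := (derivative' : Derivation ℝ ℝ[X] ℝ[X]))
    (a := 2) (y := 2 * X) (by simp [derivative']) (by simp [derivative'])
    (F := hermiteP ∘ (Fin.snoc d n : Fin (M + 1) → ℕ)) (fun j => derivative_C)
    (fun j => hermiteP_ode _)
  have hD (p : ℝ[X]) : (derivative' : Derivation ℝ ℝ[X] ℝ[X]) p = derivative p := rfl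
  rw [hinit, ← XiHermite_eq_genWronskian, ← KAHermite_eq_genWronskian, Fin.snoc_last] at h
  simp only [hD, C_mul, C_sub, C_neg, C_ofNat, C_eq_natCast] at h ⊢
  linear_combination h

theorem degree_KAHermite_add_le {M : ℕ} (d : Fin M → ℕ) (n : ℕ) :
    (KAHermite d n).degree + (M * (M + 1) / 2 : ℕ) ≤ ((∑ j, d j) + n : ℕ) := by
  have h := degree_genWronskian_add_le (hermiteP ∘ (Fin.snoc d n : Fin (M + 1) → ℕ)) Fin.val
  rw [← KAHermite_eq_genWronskian, Fin.sum_univ_eq_sum_range (fun i => i), Finset.sum_range_id,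
    Nat.add_sub_cancel, mul_comm, Fin.sum_univ_castSucc] at h
  refine h.trans ?_
  simp only [Function.comp_apply, Fin.snoc_castSucc, Fin.snoc_last]
  push_cast
  gcongr <;> exact degree_hermiteP_le _

theorem degree_KAHermite_lt {M N Nt : ℕ} (d : Fin M → ℕ)
    (hNt : Nt + M * (M + 1) / 2 = (∑ j, d j) + N) {n : ℕ} (hn : n < N) :
    (KAHermite d n).degree < Nt := by
  refine lt_of_add_lt_add_right ((degree_KAHermite_add_le d n).trans_lt ?_)
  norm_cast
  omega

theorem discrete_orthogonality_KA_hermite_general {K : Type*} [Field K] [Algebra ℝ K]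
    {M N : ℕ} (d : Fin M → ℕ)
    {Nt : ℕ} (hNt : Nt + M * (M + 1) / 2 = (∑ j, d j) + N)
    (hdeg : (KAHermite d N).natDegree = Nt)
    {η : Fin Nt → K} (hη : Function.Injective η)
    (hzero : ∀ l, aeval (η l) (KAHermite d N) = 0)
    (hXi : ∀ l, aeval (η l) (XiHermite d) ≠ 0)
    {n m : ℕ} (hnm : n ≠ m) (hn : n < N) (hm : m < N) :
    ∑ l, aeval (η l) (KAHermite d n) * aeval (η l) (KAHermite d m) /
      aeval (η l) (derivative (KAHermite d N)) ^ 2 = 0 := by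
  set φ := algebraMap ℝ K
  have hode (k : ℕ) := congrArg (map φ) (KAHermite_ode d k)
  simp only [Polynomial.map_add, Polynomial.map_mul, map_C, ← derivative_map] at hode
  have hsum := sum_eval_mul_eval_div_eval_derivative_sq (s := Finset.univ) (v := η) hη.injOn
    (p := (KAHermite d N).map φ) (f := (KAHermite d n).map φ) (g := (KAHermite d m).map φ)
    (a := φ (2 * (M - n))) (b := φ (2 * (M - m))) (φ.injective.ne (by simpa using hnm))
    (by simpa [φ] using hXi) (by simpa using hdeg) (by simpa [φ] using hzero)
    (by simpa using degree_KAHermite_lt d hNt hn) (by simpa using degree_KAHermite_lt d hNt hm)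
    (hode N) (hode n) (hode m)
  simpa [φ, derivative_map] using hsum

end Hermite

/-- **Discrete orthogonality relations for the Krein–Adler Hermite polynomials**: the sum
of `P_{D,n}·P_{D,m}` over the `Ñ` zeros of `P_{D,N}`, weighted by `1/(P_{D,N}′)²`,
vanishes for distinct `n, m ∈ {0,…,N−1} \ D`. -/
theorem discrete_orthogonality_KA_hermite
    (M N : ℕ) (d : Fin M → ℕ) (hpos : ∀ j, 0 < d j) (hmono : StrictMono d)
    (hN : ∀ j, N ≠ d j)
    (Nt : ℕ) (hNt : Nt + M * (M + 1) / 2 = (∑ j, d j) + N)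
    (hdeg : (KAHermite d N).natDegree = Nt)
    (η : Fin Nt → ℂ) (hη : Function.Injective η)
    (hzero : ∀ l, Polynomial.aeval (η l) (KAHermite d N) = 0)
    (hXi : ∀ l, Polynomial.aeval (η l) (XiHermite d) ≠ 0)
    (n m : ℕ) (hnm : n ≠ m) (hn : n < N) (hm : m < N)
    (hnD : ∀ j, n ≠ d j) (hmD : ∀ j, m ≠ d j) :
    ∑ l, Polynomial.aeval (η l) (KAHermite d n) * Polynomial.aeval (η l) (KAHermite d m) /
        (Polynomial.aeval (η l) (Polynomial.derivative (KAHermite d N))) ^ 2 = 0 :=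
  discrete_orthogonality_KA_hermite_general d hNt hdeg hη hzero hXi hnm hn hm
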